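/- Let n ≥ 3. Assume P̃^l_{ijk}α_l = P^l_{ijk}α_l at every (x,y) ∈ U × (ℝ^n \ {0}), fix p ∈ U with dα ≠ 0 at p, and assume that the vectors η^l and X^sX^l_s are linearly dependent at every nonzero y over p. Then there exists a real constant K = K(p) such that for every nonzero v ∈ ℝ^n with α_i(p)v^i = 0, the function y(t) = E(p, v + t·X_*(p)) satisfies y'(0)/y(0) = K / F_*(p,v). -/

import Mathlib

/-!
Fix the base point `p` and write `E` for the energy on the fibre, `h = X^lα_l`, and
`E_* = E h = ½ gs(y, y)`. Lowering indices with the Finsler metric `g`, the vector `η` becomes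
`α_i - (y^mα_m / 2E) ∂_iE`, and `W` becomes the differential of `h`, by total symmetry of the
Cartan tensor (`lower_W`). Hence linear dependence of `η` and `W` says that the differentials of
`E_*/E` and of `(y^mα_m)²/E` are dependent; consequently, wherever `y` is not a multiple
of the Riemannian gradient `ξ = X_*`, the differential `dE_y` kills every `w` with `α(w) = 0` and
`gs(y, w) = 0` (`fderiv_energy_eq_zero`). So `E` is invariant under the `gs`-rotations that fix
`ξ`: since `n ≥ 3`, for `v₁, v₂ ∈ ker α` of equal `gs`-length a rotation gives
`E(v₁ + tξ) = E(v₂ + tξ)` for all `t` (`eq_on_sphere`). Thus the logarithmic derivative of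
`t ↦ E(v + tξ)` at `0` depends only on the length `F_*(v)`, and by homogeneity of `E` it scales
like `1 / F_*(v)`.
-/

/- Common framework: Finsler energies in local coordinates, following the paper's
   notation.  `x` is the base point, `y` the fiber (direction) variable. -/

noncomputable section
open scoped BigOperators

namespace FinslerConformal

/-- Vectors in local coordinates. -/
abbrev Vec (n : ℕ) := Fin n → ℝ

/-- Functions on `U × ℝⁿ`, written with separate base and fiber variables. -/
abbrev Fn (n : ℕ) := Vec n → Vec n → ℝ

variable {n : ℕ}

/-- Partial derivative in the fiber variable `y`, in direction `i`. -/
def pdy (i : Fin n) (f : Fn n) : Fn n :=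
  fun x y => fderiv ℝ (f x) y (Pi.single i 1)

/-- Partial derivative in the base variable `x`, in direction `i`. -/
def pdx (i : Fin n) (f : Fn n) : Fn n :=
  fun x y => fderiv ℝ (fun x' => f x' y) x (Pi.single i 1)

/-- Partial derivative `α_i = ∂α/∂x^i` of a function of the position only. -/
def pda (α : Vec n → ℝ) (i : Fin n) (x : Vec n) : ℝ :=
  fderiv ℝ α x (Pi.single i 1)

/-- Riemann–Finsler metric `g_{ij} = ∂²E/∂y^i∂y^j`. -/
def gdown (E : Fn n) (i j : Fin n) : Fn n := pdy i (pdy j E)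

/-- The Riemann–Finsler metric as a matrix. -/
def gmat (E : Fn n) (x y : Vec n) : Matrix (Fin n) (Fin n) ℝ :=
  Matrix.of fun i j => gdown E i j x y

/-- Inverse metric `g^{ij}`. -/
def gup (E : Fn n) (i j : Fin n) : Fn n := fun x y => (gmat E x y)⁻¹ i j

/-- First Cartan tensor `C_{ijk} = ∂g_{ij}/∂y^k`. -/
def cartanDown (E : Fn n) (i j k : Fin n) : Fn n := pdy k (gdown E i j)

/-- `C^l_{ij} = g^{lk} C_{ijk}`. -/
def cartanUp (E : Fn n) (l i j : Fin n) : Fn n :=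
  fun x y => ∑ k, gup E l k x y * cartanDown E i j k x y

/-- Geodesic spray coefficients
`G^l = ½ g^{lm}(y^k ∂²E/∂y^m∂x^k − ∂E/∂x^m)`. -/
def spray (E : Fn n) (l : Fin n) : Fn n :=
  fun x y => (1/2) * ∑ m, gup E l m x y *
    ((∑ k, y k * pdy m (pdx k E) x y) - pdx m E x y)

/-- `G^l_i = ∂G^l/∂y^i`. -/
def sprayD1 (E : Fn n) (l i : Fin n) : Fn n := pdy i (spray E l)

/-- `G^l_{ij} = ∂G^l_i/∂y^j`. -/
def sprayD2 (E : Fn n) (l i j : Fin n) : Fn n := pdy j (sprayD1 E l i)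

/-- `G^l_{ijk} = ∂G^l_{ij}/∂y^k`. -/
def sprayD3 (E : Fn n) (l i j k : Fin n) : Fn n := pdy k (sprayD2 E l i j)

/-- Mixed curvature of the Berwald connection `P^l_{ijk} = −G^l_{ijk}`. -/
def mixedCurv (E : Fn n) (l i j k : Fin n) : Fn n :=
  fun x y => - sprayD3 E l i j k x y

/-- Landsberg tensor
`P^l_{ij} = ½ g^{lm}(∂g_{jm}/∂x^i − 2G^k_i C_{jkm} − G^k_{ij} g_{km} − G^k_{im} g_{jk})`. -/
def landsberg (E : Fn n) (l i j : Fin n) : Fn n :=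
  fun x y => (1/2) * ∑ m, gup E l m x y *
    (pdx i (gdown E j m) x y
      - 2 * ∑ k, sprayD1 E k i x y * cartanDown E j k m x y
      - ∑ k, sprayD2 E k i j x y * gdown E k m x y
      - ∑ k, sprayD2 E k i m x y * gdown E j k x y)

/-- A Finsler energy on an open set `U ⊆ ℝⁿ`: `C^∞` on `U × (ℝⁿ \ {0})`,
positively 2-homogeneous in `y`, with positive definite fiberwise Hessian. -/
structure IsFinslerEnergy (U : Set (Vec n)) (E : Fn n) : Prop where
  smooth : ContDiffOn ℝ (⊤ : ℕ∞) (fun p : Vec n × Vec n => E p.1 p.2) (U ×ˢ {y : Vec n | y ≠ 0})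
  homog : ∀ x ∈ U, ∀ y : Vec n, y ≠ 0 → ∀ t : ℝ, 0 < t → E x (t • y) = t ^ 2 * E x y
  posdef : ∀ x ∈ U, ∀ y : Vec n, y ≠ 0 → (gmat E x y).PosDef

/-- Conformal change of the energy: `Ẽ = e^{2α} E`. -/
def confE (E : Fn n) (α : Vec n → ℝ) : Fn n :=
  fun x y => Real.exp (2 * α x) * E x y

/-- `X^l = g^{lm} α_m`. -/
def Xup (E : Fn n) (α : Vec n → ℝ) (l : Fin n) : Fn n :=
  fun x y => ∑ m, gup E l m x y * pda α m x

/-- `X^l_i = ∂X^l/∂y^i`. -/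
def XupD (E : Fn n) (α : Vec n → ℝ) (l i : Fin n) : Fn n := pdy i (Xup E α l)

/-- `X^l_{ij} = ∂²X^l/∂y^i∂y^j`. -/
def XupD2 (E : Fn n) (α : Vec n → ℝ) (l i j : Fin n) : Fn n := pdy j (XupD E α l i)

/-- Difference tensor of the mixed Berwald curvatures `B^l_{ijk} = G̃^l_{ijk} − G^l_{ijk}`. -/
def Bdiff (E : Fn n) (α : Vec n → ℝ) (l i j k : Fin n) : Fn n :=
  fun x y => sprayD3 (confE E α) l i j k x y - sprayD3 E l i j k x y

/-- vv-curvature of the Cartan connection `Q^l_{ijk} = C^l_{jm}C^m_{ik} − C^l_{im}C^m_{jk}`. -/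
def QUp (E : Fn n) (l i j k : Fin n) : Fn n :=
  fun x y => ∑ m, (cartanUp E l j m x y * cartanUp E m i k x y
    - cartanUp E l i m x y * cartanUp E m j k x y)

/-- Lowered vv-curvature `Q_{pijk} = g_{pl} Q^l_{ijk}`. -/
def QDown (E : Fn n) (p i j k : Fin n) : Fn n :=
  fun x y => ∑ l, gdown E p l x y * QUp E l i j k x y

/-- `y^m α_m`. -/
def yalpha (α : Vec n → ℝ) : Fn n := fun x y => ∑ m, y m * pda α m x

/-- `X^l α_l`, the Riemann–Finsler norm square of the gradient `X`. -/
def Xalpha (E : Fn n) (α : Vec n → ℝ) : Fn n :=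
  fun x y => ∑ l, Xup E α l x y * pda α l x

/-- Components of the projected vector field `η^l = X^l − ((y^mα_m)/(2E)) y^l`. -/
def etaUp (E : Fn n) (α : Vec n → ℝ) (l : Fin n) : Fn n :=
  fun x y => Xup E α l x y - (yalpha α x y / (2 * E x y)) * y l

/-- `η = η^l α_l = X^lα_l − (y^mα_m)²/(2E)`. -/
def etaSc (E : Fn n) (α : Vec n → ℝ) : Fn n :=
  fun x y => ∑ l, etaUp E α l x y * pda α l x

/-- `W^l = X^s X^l_s`. -/
def Wup (E : Fn n) (α : Vec n → ℝ) (l : Fin n) : Fn n :=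
  fun x y => ∑ s, Xup E α s x y * XupD E α l s x y

/-- The associated Riemannian energy `E_* = E · X^lα_l = E · g^{lm}α_lα_m`. -/
def Estar (E : Fn n) (α : Vec n → ℝ) : Fn n :=
  fun x y => E x y * Xalpha E α x y

/-- Riemannian gradient `X_*^l = g_*^{lk} α_k`, with respect to a Hessian matrix `gs`. -/
def Xstar (α : Vec n → ℝ) (gs : Matrix (Fin n) (Fin n) ℝ) (p : Vec n) : Vec n :=
  fun l => ∑ k, gs⁻¹ l k * pda α k p

/-- `b² = g_*^{kl} α_k α_l`. -/
def bsq (α : Vec n → ℝ) (gs : Matrix (Fin n) (Fin n) ℝ) (p : Vec n) : ℝ :=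
  ∑ k, ∑ l, gs⁻¹ k l * pda α k p * pda α l p

/-- The paper's Gram expression
`X^i_m X^m X^s_i α_s · ( X^lα_l − (y^mα_m)²/(2E) ) − ( X^k X^j_k α_j )²`. -/
def gramEtaW (E : Fn n) (α : Vec n → ℝ) : Fn n :=
  fun x y =>
    (∑ i, Wup E α i x y * ∑ s, XupD E α s i x y * pda α s x) *
      (Xalpha E α x y - (yalpha α x y) ^ 2 / (2 * E x y))
    - (∑ k, ∑ j, Xup E α k x y * XupD E α j k x y * pda α j x) ^ 2

/-- The curvature contraction `X^j X^s_j X^a X^c X^i_m X^m Q_{aisc}`. -/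
def Qcon (E : Fn n) (α : Vec n → ℝ) : Fn n :=
  fun x y => ∑ j, ∑ s, ∑ a, ∑ c, ∑ i,
    Xup E α j x y * XupD E α s j x y * Xup E α a x y * Xup E α c x y *
      Wup E α i x y * QDown E a i s c x y

/-- `θ = (X^l_s X^s α_l)/η`. -/
def thetaFn (E : Fn n) (α : Vec n → ℝ) : Fn n :=
  fun x y => (∑ l, Wup E α l x y * pda α l x) / etaSc E α x y

end FinslerConformal

namespace FinslerConformal

open scoped Matrix

/-! ### Calculus in coordinates -/

/-- Expansion of a derivative in the standard coordinate directions. -/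
theorem fderiv_eq_sum {n : ℕ} (f : Vec n → ℝ) (y w : Vec n) :
    fderiv ℝ f y w = ∑ i, w i * fderiv ℝ f y (Pi.single i 1) := by
  conv_lhs => rw [← Finset.univ_sum_single w]
  rw [map_sum]
  refine Finset.sum_congr rfl fun i _ => ?_
  have : (Pi.single i (w i) : Vec n) = w i • Pi.single i 1 := by
    rw [← Pi.single_smul, smul_eq_mul, mul_one]
  rw [this, map_smul, smul_eq_mul]

/-- Smoothness away from the origin passes to directional derivatives. -/
theorem contDiffAt_pd {n : ℕ} {f : Vec n → ℝ} (w : Vec n)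
    (hf : ∀ y : Vec n, y ≠ 0 → ContDiffAt ℝ (⊤ : ℕ∞) f y) (y : Vec n) (hy : y ≠ 0) :
    ContDiffAt ℝ (⊤ : ℕ∞) (fun y => fderiv ℝ f y w) y :=
  ((hf y hy).fderiv_right (m := (⊤ : ℕ∞)) (by simp)).clm_apply contDiffAt_const

theorem differentiableAt_det {n m : ℕ} {M : Vec n → Matrix (Fin m) (Fin m) ℝ} {y : Vec n}
    (hM : ∀ i j, DifferentiableAt ℝ (fun y => M y i j) y) :
    DifferentiableAt ℝ (fun y => (M y).det) y := by
  simp only [Matrix.det_apply']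
  refine DifferentiableAt.fun_sum fun σ _ => DifferentiableAt.const_mul ?_ _
  exact (HasFDerivAt.finsetProd fun i _ => (hM (σ i) i).hasFDerivAt).differentiableAt

theorem differentiableAt_inv_entry {n m : ℕ} {M : Vec n → Matrix (Fin m) (Fin m) ℝ} {y : Vec n}
    (hM : ∀ i j, DifferentiableAt ℝ (fun y => M y i j) y) (h0 : (M y).det ≠ 0) (i j : Fin m) :
    DifferentiableAt ℝ (fun y => (M y)⁻¹ i j) y := by
  simp only [Matrix.inv_def, Ring.inverse_eq_inv', Matrix.smul_apply, smul_eq_mul,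
    Matrix.adjugate_apply]
  refine ((differentiableAt_det hM).inv h0).mul (differentiableAt_det fun k l => ?_)
  by_cases hk : k = j
  · subst hk; simp
  · simpa [Matrix.updateRow_ne hk] using hM k l

/-! ### Index lowering on the fibre -/

/-- The two Euler relations `y^j ∂_j E = 2E` and `g_{ij} y^j = ∂_i E`. -/
theorem euler {n : ℕ} {U : Set (Vec n)} {E : Fn n} (hE : IsFinslerEnergy U E) {p : Vec n}
    (hp : p ∈ U) (hs : ∀ y : Vec n, y ≠ 0 → ContDiffAt ℝ (⊤ : ℕ∞) (E p) y)
    (y : Vec n) (hy : y ≠ 0) :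
    fderiv ℝ (E p) y y = 2 * E p y ∧
      ∀ i, ∑ j, gdown E i j p y * y j = fderiv ℝ (E p) y (Pi.single i 1) := by
  have e1 : ∀ y : Vec n, y ≠ 0 → fderiv ℝ (E p) y y = 2 * E p y := by
    intro y hy
    have hd : DifferentiableAt ℝ (E p) ((1 : ℝ) • y) := by
      rw [one_smul]; exact (hs y hy).differentiableAt (by simp)
    have h1 : HasDerivAt (fun t : ℝ => E p (t • y)) (fderiv ℝ (E p) ((1 : ℝ) • y) y) 1 := by
      have := hd.hasFDerivAt.comp_hasDerivAt (1 : ℝ) ((hasDerivAt_id (1 : ℝ)).smul_const y)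
      simpa [Function.comp_def] using this
    have h2 : HasDerivAt (fun t : ℝ => t ^ 2 * E p y) (2 * E p y) 1 := by
      simpa using (hasDerivAt_pow 2 (1 : ℝ)).mul_const (E p y)
    have h3 : (fun t : ℝ => E p (t • y)) =ᶠ[nhds 1] fun t : ℝ => t ^ 2 * E p y := by
      filter_upwards [lt_mem_nhds (zero_lt_one : (0 : ℝ) < 1)] with t ht
      exact hE.homog p hp y hy t ht
    have := h1.unique (h2.congr_of_eventuallyEq h3)
    simpa using this
  refine ⟨e1 y hy, fun i => ?_⟩
  have hc : ∀ j, DifferentiableAt ℝ (fun y => fderiv ℝ (E p) y (Pi.single j 1)) y := fun j =>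
    (contDiffAt_pd _ hs y hy).differentiableAt (by simp)
  have hev : (fun y : Vec n => ∑ j, y j * fderiv ℝ (E p) y (Pi.single j 1)) =ᶠ[nhds y]
      fun y => 2 * E p y := by
    filter_upwards [isOpen_ne.mem_nhds hy] with z hz
    rw [← fderiv_eq_sum, e1 z hz]
  have hfd := hev.fderiv_eq (𝕜 := ℝ)
  have hco : ∀ j : Fin n, HasFDerivAt (fun y : Vec n => y j)
      (ContinuousLinearMap.proj (R := ℝ) (φ := fun _ : Fin n => ℝ) j) y := fun j =>
    (ContinuousLinearMap.proj (R := ℝ) (φ := fun _ : Fin n => ℝ) j).hasFDerivAt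
  have hL : HasFDerivAt (fun y : Vec n => ∑ j, y j * fderiv ℝ (E p) y (Pi.single j 1)) _ y :=
    HasFDerivAt.fun_sum fun j _ => (hco j).mul (hc j).hasFDerivAt
  have hR := (((hs y hy).differentiableAt (by simp)).hasFDerivAt).const_mul (2 : ℝ)
  rw [hL.fderiv, hR.fderiv] at hfd
  have := congrArg (fun L => L (Pi.single i 1)) hfd
  simp only [_root_.sum_apply, _root_.add_apply,
    _root_.smul_apply, ContinuousLinearMap.proj_apply, smul_eq_mul,
    Finset.sum_add_distrib, Pi.single_apply, mul_ite, mul_one, mul_zero, Finset.sum_ite_eq',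
    Finset.mem_univ, if_true] at this
  have h3 : ∀ j, gdown E i j p y = fderiv ℝ (fun y => fderiv ℝ (E p) y (Pi.single j 1)) y
      (Pi.single i 1) := fun j => rfl
  simp only [h3]
  have h4 : ∀ j, (fderiv ℝ (fun y => fderiv ℝ (E p) y (Pi.single j 1)) y (Pi.single i 1)) * y j
      = y j * (fderiv ℝ (fun y => fderiv ℝ (E p) y (Pi.single j 1)) y) (Pi.single i 1) :=
    fun j => mul_comm _ _
  rw [Finset.sum_congr rfl fun j _ => h4 j]
  linarith

/-- Lowering the index of `W` gives the differential of the squared norm `X^lα_l`: from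
`g_{il} X^l = α_i` one gets `g_{il} W^l = -X^s X^l ∂_s g_{il}` and
`∂_i (X^lα_l) = -X^m X^l ∂_i g_{ml}`, which agree because `∂_s g_{il}` is totally symmetric. -/
theorem lower_W {n : ℕ} {U : Set (Vec n)} {E : Fn n} (hE : IsFinslerEnergy U E)
    (α : Vec n → ℝ) {p : Vec n}
    (hp : p ∈ U) (hs : ∀ y : Vec n, y ≠ 0 → ContDiffAt ℝ (⊤ : ℕ∞) (E p) y)
    (y : Vec n) (hy : y ≠ 0) :
    DifferentiableAt ℝ (Xalpha E α p) y ∧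
    (∀ i, ∑ l, gdown E i l p y * Xup E α l p y = pda α i p) ∧
      ∀ i, ∑ l, gdown E i l p y * Wup E α l p y =
        fderiv ℝ (Xalpha E α p) y (Pi.single i 1) := by
  have hgc : ∀ i j y, y ≠ 0 → ContDiffAt ℝ (⊤ : ℕ∞) (gdown E i j p) y := fun i j =>
    contDiffAt_pd _ (contDiffAt_pd _ hs)
  have hgd : ∀ i j, DifferentiableAt ℝ (gdown E i j p) y := fun i j =>
    (hgc i j y hy).differentiableAt (by simp)
  have hXd : ∀ l, DifferentiableAt ℝ (Xup E α l p) y := fun l => by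
    refine DifferentiableAt.fun_sum fun m _ => DifferentiableAt.mul_const ?_ _
    exact differentiableAt_inv_entry (M := gmat E p) (fun i j => hgd i j)
      (hE.posdef p hp y hy).det_pos.ne' l m
  have hgX : ∀ y : Vec n, y ≠ 0 → ∀ i, ∑ l, gdown E i l p y * Xup E α l p y = pda α i p := by
    intro y hy i
    have hu : IsUnit (gmat E p y).det := (hE.posdef p hp y hy).det_pos.ne'.isUnit
    have : gmat E p y *ᵥ ((gmat E p y)⁻¹ *ᵥ fun m => pda α m p) = fun m => pda α m p := by
      rw [Matrix.mulVec_mulVec, Matrix.mul_nonsing_inv _ hu, Matrix.one_mulVec]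
    exact congrFun this i
  have hsymm : ∀ y : Vec n, y ≠ 0 → ∀ i j, gdown E i j p y = gdown E j i p y := by
    intro y hy i j
    have := (hE.posdef p hp y hy).isHermitian.apply j i
    simpa [gmat] using this
  -- total symmetry of the Cartan tensor
  have hC : ∀ s i l, fderiv ℝ (gdown E i l p) y (Pi.single s 1)
      = fderiv ℝ (gdown E s l p) y (Pi.single i 1) := by
    intro s i l
    have hcl : ContDiffAt ℝ (⊤ : ℕ∞) (fun y => fderiv ℝ (E p) y (Pi.single l 1)) y :=
      contDiffAt_pd _ hs y hy
    have hd : DifferentiableAt ℝ (fderiv ℝ (fun y => fderiv ℝ (E p) y (Pi.single l 1))) y :=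
      (hcl.fderiv_right (m := (⊤ : ℕ∞)) (by simp)).differentiableAt (by simp)
    have key : ∀ u w : Vec n,
        fderiv ℝ (fun z => fderiv ℝ (fun y => fderiv ℝ (E p) y (Pi.single l 1)) z u) y w
        = fderiv ℝ (fderiv ℝ (fun y => fderiv ℝ (E p) y (Pi.single l 1))) y w u := by
      intro u w
      rw [fderiv_clm_apply hd (differentiableAt_const u)]
      simp
    have hsy : IsSymmSndFDerivAt ℝ (fun y => fderiv ℝ (E p) y (Pi.single l 1)) y :=
      hcl.isSymmSndFDerivAt (by
        rw [minSmoothness_of_isRCLikeNormedField]; exact WithTop.coe_le_coe.2 (le_top : (2 : ℕ∞) ≤ ⊤))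
    change fderiv ℝ (fun z => fderiv ℝ (fun y => fderiv ℝ (E p) y (Pi.single l 1)) z
      (Pi.single i 1)) y (Pi.single s 1) = fderiv ℝ (fun z => fderiv ℝ (fun y =>
      fderiv ℝ (E p) y (Pi.single l 1)) z (Pi.single s 1)) y (Pi.single i 1)
    rw [key, key]
    exact hsy _ _
  -- derivative of the identity `g_{il} X^l = α_i`
  have hD : ∀ s i, ∑ l, gdown E i l p y * XupD E α l s p y
      = - ∑ l, Xup E α l p y * fderiv ℝ (gdown E i l p) y (Pi.single s 1) := by
    intro s i
    have hev : (fun y : Vec n => ∑ l, gdown E i l p y * Xup E α l p y) =ᶠ[nhds y]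
        fun _ => pda α i p := by
      filter_upwards [isOpen_ne.mem_nhds hy] with z hz using hgX z hz i
    have hfd := hev.fderiv_eq (𝕜 := ℝ)
    have hL : HasFDerivAt (fun y : Vec n => ∑ l, gdown E i l p y * Xup E α l p y) _ y :=
      HasFDerivAt.fun_sum fun l _ => (hgd i l).hasFDerivAt.mul (hXd l).hasFDerivAt
    rw [hL.fderiv, fderiv_fun_const] at hfd
    have := congrArg (fun L => L (Pi.single s 1)) hfd
    simp only [_root_.sum_apply, _root_.add_apply,
      _root_.smul_apply, smul_eq_mul, Finset.sum_add_distrib, Pi.zero_apply,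
      _root_.zero_apply] at this
    exact eq_neg_of_add_eq_zero_left this
  have hhd : HasFDerivAt (Xalpha E α p) (∑ l, pda α l p • fderiv ℝ (Xup E α l p) y) y :=
    HasFDerivAt.fun_sum fun l _ => (hXd l).hasFDerivAt.mul_const _
  refine ⟨hhd.differentiableAt, hgX y hy, fun i => ?_⟩
  have lhs : ∑ l, gdown E i l p y * Wup E α l p y
      = - ∑ s, ∑ l, Xup E α s p y * Xup E α l p y
          * fderiv ℝ (gdown E s l p) y (Pi.single i 1) := by
    calc ∑ l, gdown E i l p y * Wup E α l p y
        = ∑ s, Xup E α s p y * ∑ l, gdown E i l p y * XupD E α l s p y := by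
          simp only [Wup, Finset.mul_sum]
          rw [Finset.sum_comm]
          exact Finset.sum_congr rfl fun _ _ => Finset.sum_congr rfl fun _ _ => by ring
      _ = _ := by
          rw [← Finset.sum_neg_distrib]
          refine Finset.sum_congr rfl fun s _ => ?_
          rw [hD, mul_neg, Finset.mul_sum]
          congr 1
          refine Finset.sum_congr rfl fun l _ => ?_
          rw [hC s i l]; ring
  rw [lhs, hhd.fderiv]
  simp only [_root_.sum_apply, _root_.smul_apply, smul_eq_mul]
  calc _ = ∑ s, Xup E α s p y * ∑ l, gdown E s l p y * XupD E α l i p y := by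
        rw [← Finset.sum_neg_distrib]
        refine Finset.sum_congr rfl fun s _ => ?_
        rw [hD, mul_neg, Finset.mul_sum]
        congr 1
        exact Finset.sum_congr rfl fun l _ => by ring
    _ = ∑ l, (∑ s, gdown E l s p y * Xup E α s p y) * XupD E α l i p y := by
        simp only [Finset.mul_sum, Finset.sum_mul]
        rw [Finset.sum_comm]
        refine Finset.sum_congr rfl fun l _ => Finset.sum_congr rfl fun s _ => ?_
        rw [hsymm y hy s l]; ring
    _ = _ := by
        refine Finset.sum_congr rfl fun l _ => ?_
        rw [hgX y hy l]; rfl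

/-! ### The dependence hypothesis as a condition on `dE` -/

/-- Away from the line spanned by the Riemannian gradient (this is what `v` witnesses), the
differential of the energy vanishes on vectors `w` that are both annihilated by `α` and
orthogonal to `y` for the Riemannian metric `gs`. -/
theorem fderiv_energy_eq_zero {n : ℕ} {U : Set (Vec n)} {E : Fn n} (hE : IsFinslerEnergy U E)
    (α : Vec n → ℝ) {p : Vec n}
    (hp : p ∈ U) (hdα : fderiv ℝ α p ≠ 0)
    (hs : ∀ y : Vec n, y ≠ 0 → ContDiffAt ℝ (⊤ : ℕ∞) (E p) y)
    (gs : Matrix (Fin n) (Fin n) ℝ) (hsym : gs.IsSymm) (hpos : gs.PosDef)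
    (hquad : ∀ y : Vec n, y ≠ 0 →
      Estar E α p y = (1/2) * ∑ i, ∑ j, gs i j * y i * y j)
    (y : Vec n) (hy : y ≠ 0)
    (hdep : ¬ LinearIndependent ℝ ![(fun l => etaUp E α l p y), (fun l => Wup E α l p y)])
    (v w : Vec n) (hv : fderiv ℝ α p v = 0) (hyv : y ⬝ᵥ gs *ᵥ v ≠ 0)
    (hw : fderiv ℝ α p w = 0) (hyw : y ⬝ᵥ gs *ᵥ w = 0) :
    fderiv ℝ (E p) y w = 0 := by
  obtain ⟨eu1, eu2⟩ := euler hE hp hs y hy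
  obtain ⟨hhd, hgX, hgW⟩ := lower_W hE α hp hs y hy
  have hquad' : ∀ y : Vec n, y ≠ 0 → E p y * Xalpha E α p y = (1/2) * (y ⬝ᵥ gs *ᵥ y) := by
    intro y hy
    have := hquad y hy
    rw [Estar] at this
    rw [this]
    simp only [dotProduct, Matrix.mulVec, Finset.mul_sum]
    exact Finset.sum_congr rfl fun _ _ => Finset.sum_congr rfl fun _ _ => by ring
  have hepos : 0 < E p y := by
    have h := (hE.posdef p hp y hy).dotProduct_mulVec_pos hy
    have h2 : star y ⬝ᵥ (gmat E p y *ᵥ y) = fderiv ℝ (E p) y y := by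
      rw [fderiv_eq_sum]
      refine Finset.sum_congr rfl fun i _ => ?_
      rw [← eu2 i]; rfl
    rw [h2, eu1] at h
    linarith
  -- differentiating `E · X^lα_l = E_*`
  have hprod : ∀ u : Vec n, E p y * fderiv ℝ (Xalpha E α p) y u
      + Xalpha E α p y * fderiv ℝ (E p) y u = y ⬝ᵥ gs *ᵥ u := by
    intro u
    have hL := ((hs y hy).differentiableAt (by simp)).hasFDerivAt.mul hhd.hasFDerivAt
    have hl : HasDerivAt (fun t : ℝ => y + t • u) u 0 := by
      simpa using ((hasDerivAt_id (0 : ℝ)).smul_const u).const_add y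
    have hL' : HasFDerivAt (E p * Xalpha E α p) (E p y • fderiv ℝ (Xalpha E α p) y
      + Xalpha E α p y • fderiv ℝ (E p) y) (y + (0 : ℝ) • u) := by simpa using hL
    have h1 := hL'.comp_hasDerivAt (0 : ℝ) hl
    have h2 : HasDerivAt (fun t : ℝ => (1/2) * (y ⬝ᵥ gs *ᵥ y) + t * (y ⬝ᵥ gs *ᵥ u)
        + t ^ 2 * ((1/2) * (u ⬝ᵥ gs *ᵥ u))) (y ⬝ᵥ gs *ᵥ u) 0 := by
      have := (((hasDerivAt_id (0 : ℝ)).mul_const (y ⬝ᵥ gs *ᵥ u)).const_add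
        ((1/2) * (y ⬝ᵥ gs *ᵥ y))).add
        ((hasDerivAt_pow 2 (0 : ℝ)).mul_const ((1/2) * (u ⬝ᵥ gs *ᵥ u)))
      refine this.congr_deriv ?_
      simp
    have huy : u ⬝ᵥ gs *ᵥ y = y ⬝ᵥ gs *ᵥ u := by
      rw [Matrix.dotProduct_mulVec, ← Matrix.mulVec_transpose, hsym.eq, dotProduct_comm]
    have h3 : ((E p * Xalpha E α p) ∘ fun t : ℝ => y + t • u) =ᶠ[nhds 0]
        fun t : ℝ => (1/2) * (y ⬝ᵥ gs *ᵥ y) + t * (y ⬝ᵥ gs *ᵥ u)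
        + t ^ 2 * ((1/2) * (u ⬝ᵥ gs *ᵥ u)) := by
      have hc : ∀ᶠ t : ℝ in nhds 0, y + t • u ≠ 0 :=
        hl.continuousAt.eventually_ne (by simpa using hy)
      filter_upwards [hc] with t ht
      simp only [Function.comp, Pi.mul_apply]
      rw [hquad' _ ht]
      simp only [Matrix.mulVec_add, Matrix.mulVec_smul, dotProduct_add, add_dotProduct,
        smul_dotProduct, dotProduct_smul, smul_eq_mul, huy]
      ring
    have := h1.unique (h2.congr_of_eventuallyEq h3)
    simpa using this
  have hhpos : 0 < Xalpha E α p y := by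
    have h := hpos.dotProduct_mulVec_pos hy
    have h2 := hquad' y hy
    simp only [star_trivial] at h
    by_contra hneg
    nlinarith [mul_nonneg hepos.le (sub_nonneg.2 (not_lt.1 hneg))]
  rw [LinearIndependent.pair_iff] at hdep
  push Not at hdep
  obtain ⟨c₁, c₂, hc, hne⟩ := hdep
  -- the dependence relation with lowered index
  have hlow : ∀ u : Vec n, c₁ * (fderiv ℝ α p u
      - yalpha α p y / (2 * E p y) * fderiv ℝ (E p) y u)
      + c₂ * fderiv ℝ (Xalpha E α p) y u = 0 := by
    intro u
    have hi : ∀ i, c₁ * (pda α i p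
        - yalpha α p y / (2 * E p y) * fderiv ℝ (E p) y (Pi.single i 1))
        + c₂ * fderiv ℝ (Xalpha E α p) y (Pi.single i 1) = 0 := by
      intro i
      rw [← hgX i, ← eu2 i, ← hgW i]
      have : ∀ l, gdown E i l p y * (c₁ * etaUp E α l p y + c₂ * Wup E α l p y) = 0 := by
        intro l
        have := congrFun hc l
        simp only [Pi.add_apply, Pi.smul_apply, smul_eq_mul, Pi.zero_apply] at this
        rw [this, mul_zero]
      rw [← Finset.sum_eq_zero fun l (_ : l ∈ Finset.univ) => this l]
      simp only [Finset.mul_sum, ← Finset.sum_sub_distrib, ← Finset.sum_add_distrib, etaUp]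
      exact Finset.sum_congr rfl fun l _ => by ring
    rw [fderiv_eq_sum α, fderiv_eq_sum (E p), fderiv_eq_sum (Xalpha E α p)]
    rw [← Finset.sum_eq_zero fun i (_ : i ∈ Finset.univ) =>
      show u i * (c₁ * (pda α i p
        - yalpha α p y / (2 * E p y) * fderiv ℝ (E p) y (Pi.single i 1))
        + c₂ * fderiv ℝ (Xalpha E α p) y (Pi.single i 1)) = 0 by rw [hi i, mul_zero]]
    simp only [Finset.mul_sum, ← Finset.sum_sub_distrib, ← Finset.sum_add_distrib, pda]
    exact Finset.sum_congr rfl fun l _ => by ring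
  set b := yalpha α p y
  have hker : ∀ u : Vec n, fderiv ℝ α p u = 0 →
      c₂ * (y ⬝ᵥ gs *ᵥ u) = (c₁ * b / 2 + c₂ * Xalpha E α p y) * fderiv ℝ (E p) y u := by
    intro u hu
    have h1 := hlow u
    have h2 := hprod u
    rw [hu] at h1
    rw [← h2]
    field_simp at h1
    linarith
  by_contra hD
  have hzero : c₁ * b / 2 + c₂ * Xalpha E α p y = 0 := by
    have := hker w hw
    rw [hyw, mul_zero] at this
    exact (mul_eq_zero.1 this.symm).resolve_right hD
  have hc2 : c₂ = 0 := by
    have := hker v hv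
    rw [hzero, zero_mul] at this
    exact (mul_eq_zero.1 this).resolve_right hyv
  have hc1 : c₁ ≠ 0 := fun h => hne h hc2
  have hb : b = 0 := by
    rw [hc2] at hzero
    have : c₁ * b = 0 := by linarith
    exact (mul_eq_zero.1 this).resolve_left hc1
  apply hdα
  ext u
  have := hlow u
  rw [hc2, hb] at this
  simpa [hc1] using this

/-! ### Rotational symmetry -/

/-- If the derivative of `f` at `y` kills every vector of `ker A ∩ y^⊥` (away from the line
orthogonal to `ker A`), then on each translate of `ker A` along `ξ ⊥ ker A` the function `f` takes
the same value at any two points of the same sphere about the axis: rotate one to the other.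
Dimension at least three makes `ker A` large enough for a rotation plane to exist. -/
theorem eq_on_sphere {n : ℕ} (hn : 3 ≤ n) (B : Vec n →ₗ[ℝ] Vec n →ₗ[ℝ] ℝ)
    (hsymm : ∀ u w, B u w = B w u) (hpos : ∀ u, u ≠ 0 → 0 < B u u)
    (A : Vec n →ₗ[ℝ] ℝ) (ξ : Vec n) (hξ : ∀ u, B u ξ = A u) (f : Vec n → ℝ)
    (hf : ∀ y, y ≠ 0 → DifferentiableAt ℝ f y)
    (hdf : ∀ y, y ≠ 0 → ∀ v w, A v = 0 → B y v ≠ 0 → A w = 0 → B y w = 0 → fderiv ℝ f y w = 0)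
    (v₁ v₂ : Vec n) (h₁ : v₁ ≠ 0) (hA₁ : A v₁ = 0) (hA₂ : A v₂ = 0)
    (hr : B v₁ v₁ = B v₂ v₂) (t : ℝ) : f (v₂ + t • ξ) = f (v₁ + t • ξ) := by
  have hr0 := hpos v₁ h₁
  have rot : ∀ u, A u = 0 → B v₁ u = 0 → B u u = B v₁ v₁ → ∀ θ : ℝ,
      f (Real.cos θ • v₁ + Real.sin θ • u + t • ξ) = f (v₁ + t • ξ) := by
    intro u hAu hu hru θ
    have hu' : B u v₁ = 0 := by rw [hsymm, hu]
    have hξ₁ : B ξ v₁ = 0 := by rw [hsymm, hξ, hA₁]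
    have hξu : B ξ u = 0 := by rw [hsymm, hξ, hAu]
    have hd : ∀ θ : ℝ, HasDerivAt
        (fun θ : ℝ => f (Real.cos θ • v₁ + Real.sin θ • u + t • ξ)) 0 θ := by
      intro θ
      have hc : HasDerivAt (fun θ : ℝ => Real.cos θ • v₁ + Real.sin θ • u + t • ξ)
          ((-Real.sin θ) • v₁ + Real.cos θ • u) θ :=
        (((Real.hasDerivAt_cos θ).smul_const v₁).add
          ((Real.hasDerivAt_sin θ).smul_const u)).add_const _
      have hBv : B (Real.cos θ • v₁ + Real.sin θ • u + t • ξ)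
          (Real.cos θ • v₁ + Real.sin θ • u) = B v₁ v₁ := by
        simp only [map_add, map_smul, LinearMap.add_apply, LinearMap.smul_apply, smul_eq_mul,
          hu, hu', hξ₁, hξu, hru]
        linear_combination (B v₁ v₁) * Real.sin_sq_add_cos_sq θ
      have hy : Real.cos θ • v₁ + Real.sin θ • u + t • ξ ≠ 0 := by
        intro h0
        rw [h0, map_zero, LinearMap.zero_apply] at hBv
        exact hr0.ne hBv
      have h0 := hdf _ hy (Real.cos θ • v₁ + Real.sin θ • u)
        ((-Real.sin θ) • v₁ + Real.cos θ • u) (by simp [hA₁, hAu]) (by rw [hBv]; exact hr0.ne')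
        (by simp [hA₁, hAu]) (by
          simp only [map_add, map_smul, LinearMap.add_apply, LinearMap.smul_apply, smul_eq_mul,
            hu, hu', hξ₁, hξu, hru]
          ring)
      have := (hf _ hy).hasFDerivAt.comp_hasDerivAt θ hc
      rw [h0] at this
      exact this
    have := is_const_of_deriv_eq_zero (fun θ => (hd θ).differentiableAt)
      (fun θ => (hd θ).deriv) θ 0
    simpa using this
  set r := B v₁ v₁
  set k := B v₁ v₂ / r
  set z := v₂ - k • v₁ with hz
  have hk : B v₁ v₂ = k * r := by simp only [k]; field_simp
  have hBz : B v₁ z = 0 := by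
    simp only [hz, map_sub, map_smul, smul_eq_mul, hk]; change k * r - k * r = 0; ring
  have hAz : A z = 0 := by simp [hz, hA₁, hA₂]
  have hzz : B z z = r * (1 - k ^ 2) := by
    have h21 : B v₂ v₁ = k * r := by rw [hsymm, hk]
    simp only [hz, map_sub, map_smul, LinearMap.sub_apply, LinearMap.smul_apply, smul_eq_mul,
      hk, h21, ← hr]
    change r - k * (k * r) - k * (k * r - k * r) = _
    ring
  have hk2 : 0 ≤ 1 - k ^ 2 := by
    by_cases h0 : z = 0
    · rw [h0] at hzz
      simp only [map_zero] at hzz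
      exact ((mul_eq_zero.1 hzz.symm).resolve_left hr0.ne').ge
    · have := hpos z h0
      rw [hzz] at this
      exact ((pos_iff_pos_of_mul_pos this).1 hr0).le
  obtain ⟨u, hAu, hBu, hru, hzu⟩ : ∃ u, A u = 0 ∧ B v₁ u = 0 ∧ B u u = r ∧
      z = Real.sqrt (1 - k ^ 2) • u := by
    -- it suffices to find a nonzero vector of the rotation plane, up to normalization
    obtain ⟨u, hu0, hAu, hBu, c, hc, hzc⟩ : ∃ u, u ≠ 0 ∧ A u = 0 ∧ B v₁ u = 0 ∧
        ∃ c : ℝ, 0 ≤ c ∧ z = c • u := by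
      by_cases h0 : z = 0
      · let L : Vec n →ₗ[ℝ] (Fin 2 → ℝ) := LinearMap.pi ![A, B v₁]
        have hL : LinearMap.ker L ≠ ⊥ := LinearMap.ker_ne_bot_of_finrank_lt (by simp; omega)
        obtain ⟨u, hu, hu0⟩ := Submodule.exists_mem_ne_zero_of_ne_bot hL
        have hu' := LinearMap.mem_ker.1 hu
        exact ⟨u, hu0, by simpa [L] using congrFun hu' 0, by simpa [L] using congrFun hu' 1,
          0, le_rfl, by simp [h0]⟩
      · exact ⟨z, h0, hAz, hBz, 1, zero_le_one, by simp⟩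
    have hu := hpos u hu0
    refine ⟨Real.sqrt (r / B u u) • u, by simp [hAu], by simp [hBu], ?_, ?_⟩
    · simp only [map_smul, LinearMap.smul_apply, smul_eq_mul, ← mul_assoc]
      rw [Real.mul_self_sqrt (by positivity)]
      field_simp
    · have h1 : (1 - k ^ 2) * (r / B u u) = c ^ 2 := by
        have : B z z = c ^ 2 * B u u := by
          rw [hzc]; simp only [map_smul, LinearMap.smul_apply, smul_eq_mul]; ring
        rw [hzz] at this
        field_simp
        linarith
      rw [smul_smul, ← Real.sqrt_mul hk2, h1, Real.sqrt_sq hc]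
      exact hzc
  have hkl : -1 ≤ k ∧ k ≤ 1 := abs_le.1 (abs_le_one_iff_mul_self_le_one.2 (by nlinarith))
  have := rot u hAu hBu hru (Real.arccos k)
  rw [Real.cos_arccos hkl.1 hkl.2, Real.sin_arccos, ← hzu] at this
  rw [← this, hz]
  congr 2
  abel

/-! ### The initial condition -/

/-- the initial condition, Theorem 4 of the paper. Under the hypotheses
of the rigidity problem there is a constant `K = K(p)` such that for every nonzero `v`
with `α_i(p)v^i = 0`, the function `y(t) = E(p, v + t·X_*(p))` satisfies
`y'(0)/y(0) = K / F_*(p,v)`. -/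
theorem initial_condition
    {n : ℕ} (hn : 3 ≤ n) (U : Set (Vec n)) (hU : IsOpen U)
    (E : Fn n) (hE : IsFinslerEnergy U E)
    (α : Vec n → ℝ) (hα : ContDiffOn ℝ (⊤ : ℕ∞) α U)
    (p : Vec n) (hp : p ∈ U) (hdα : fderiv ℝ α p ≠ 0)
    (hinv : ∀ x ∈ U, ∀ y : Vec n, y ≠ 0 → ∀ i j k : Fin n,
      (∑ l, mixedCurv (confE E α) l i j k x y * pda α l x) =
        ∑ l, mixedCurv E l i j k x y * pda α l x)
    (gs : Matrix (Fin n) (Fin n) ℝ) (hsym : gs.IsSymm) (hpos : gs.PosDef)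
    (hquad : ∀ y : Vec n, y ≠ 0 →
      Estar E α p y = (1/2) * ∑ i, ∑ j, gs i j * y i * y j)
    (hdep : ∀ y : Vec n, y ≠ 0 →
      ¬ LinearIndependent ℝ ![(fun l => etaUp E α l p y), (fun l => Wup E α l p y)]) :
    ∃ K : ℝ, ∀ v : Vec n, v ≠ 0 → (∑ i, pda α i p * v i) = 0 →
      deriv (fun t : ℝ => E p (v + t • Xstar α gs p)) 0 / E p v =
        K / Real.sqrt (2 * Estar E α p v) := by
  have hs : ∀ y : Vec n, y ≠ 0 → ContDiffAt ℝ (⊤ : ℕ∞) (E p) y := by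
    intro y hy
    have h1 := hE.smooth.contDiffAt
      ((hU.prod isOpen_ne).mem_nhds (show (p, y) ∈ U ×ˢ {y : Vec n | y ≠ 0} from ⟨hp, hy⟩))
    exact h1.comp y (contDiffAt_const.prodMk contDiffAt_id)
  set ξ := Xstar α gs p with hξdef
  let B : Vec n →ₗ[ℝ] Vec n →ₗ[ℝ] ℝ := Matrix.toBilin' gs
  have hB : ∀ u w, B u w = u ⬝ᵥ gs *ᵥ w := fun u w => Matrix.toBilin'_apply' gs u w
  let A : Vec n →ₗ[ℝ] ℝ := (fderiv ℝ α p : Vec n →L[ℝ] ℝ)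
  have hA : ∀ u, A u = ∑ i, pda α i p * u i := by
    intro u
    change fderiv ℝ α p u = _
    rw [fderiv_eq_sum]
    exact Finset.sum_congr rfl fun i _ => mul_comm _ _
  have hsymm : ∀ u w, B u w = B w u := by
    intro u w
    rw [hB, hB, Matrix.dotProduct_mulVec, ← Matrix.mulVec_transpose, hsym.eq, dotProduct_comm]
  have hBpos : ∀ u, u ≠ 0 → 0 < B u u := by
    intro u hu
    rw [hB]
    simpa using hpos.dotProduct_mulVec_pos hu
  have hξ : ∀ u, B u ξ = A u := by
    intro u
    have h1 : gs *ᵥ ξ = fun k => pda α k p := by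
      change gs *ᵥ (gs⁻¹ *ᵥ fun k => pda α k p) = _
      rw [Matrix.mulVec_mulVec, Matrix.mul_nonsing_inv _ hpos.det_pos.ne'.isUnit,
        Matrix.one_mulVec]
    rw [hB, h1, hA, dotProduct_comm]
    rfl
  have hEs : ∀ v : Vec n, v ≠ 0 → 2 * Estar E α p v = B v v := by
    intro v hv
    rw [hquad v hv, hB]
    simp only [dotProduct, Matrix.mulVec, Finset.mul_sum]
    exact Finset.sum_congr rfl fun _ _ => Finset.sum_congr rfl fun _ _ => by ring
  have hsph := eq_on_sphere hn B hsymm hBpos A ξ hξ (E p)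
    (fun y hy => (hs y hy).differentiableAt (by simp))
    (fun y hy v w hv hyv hw hyw => fderiv_energy_eq_zero hE α hp hdα hs gs hsym hpos hquad y hy
      (hdep y hy) v w hv (by rwa [← hB]) hw (by rwa [← hB]))
  -- a reference vector in the kernel of `dα`
  obtain ⟨v₀, hv₀, hA₀⟩ : ∃ v₀ : Vec n, v₀ ≠ 0 ∧ A v₀ = 0 := by
    have hL : LinearMap.ker A ≠ ⊥ := LinearMap.ker_ne_bot_of_finrank_lt (by simp; omega)
    obtain ⟨u, hu, hu0⟩ := Submodule.exists_mem_ne_zero_of_ne_bot hL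
    exact ⟨u, hu0, LinearMap.mem_ker.1 hu⟩
  refine ⟨deriv (fun t : ℝ => E p (v₀ + t • ξ)) 0 / E p v₀ * Real.sqrt (B v₀ v₀), ?_⟩
  intro v hv hav
  have hAv : A v = 0 := by rw [hA, hav]
  rw [hEs v hv]
  have hb := hBpos v hv
  have hb₀ := hBpos v₀ hv₀
  have hsb : 0 < Real.sqrt (B v v) := Real.sqrt_pos.2 hb
  have hsb₀ : 0 < Real.sqrt (B v₀ v₀) := Real.sqrt_pos.2 hb₀
  -- rescale `v` to the `gs`-length of the reference vector
  set c := Real.sqrt (B v₀ v₀) / Real.sqrt (B v v) with hc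
  have hc0 : 0 < c := div_pos hsb₀ hsb
  have hcv : B v₀ v₀ = B (c • v) (c • v) := by
    simp only [map_smul, LinearMap.smul_apply, smul_eq_mul, ← mul_assoc]
    rw [← sq, hc, div_pow, Real.sq_sqrt hb.le, Real.sq_sqrt hb₀.le]
    field_simp
  have hAξ : 0 < A ξ := by
    rw [← hξ]
    refine hBpos ξ fun h0 => hdα ?_
    ext u
    change A u = 0
    rw [← hξ, h0, map_zero]
  have hne : ∀ t : ℝ, v + t • ξ ≠ 0 := by
    intro t h0
    have h1 : A (v + t • ξ) = 0 := by rw [h0, map_zero]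
    rw [map_add, map_smul, hAv, zero_add, smul_eq_mul] at h1
    have ht : t = 0 := (mul_eq_zero.1 h1).resolve_right hAξ.ne'
    rw [ht, zero_smul, add_zero] at h0
    exact hv h0
  have hscale : ∀ t : ℝ, E p (v₀ + (c * t) • ξ) = c ^ 2 * E p (v + t • ξ) := by
    intro t
    rw [← hE.homog p hp _ (hne t) c hc0, smul_add, smul_smul]
    exact (hsph v₀ (c • v) hv₀ hA₀ (by rw [map_smul, hAv, smul_zero]) hcv _).symm
  have h0 : E p v₀ = c ^ 2 * E p v := by simpa using hscale 0
  have hder : c * deriv (fun t : ℝ => E p (v₀ + t • ξ)) 0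
      = c ^ 2 * deriv (fun t : ℝ => E p (v + t • ξ)) 0 := by
    have h1 := deriv_comp_mul_left c (fun t : ℝ => E p (v₀ + t • ξ)) 0
    simp only [hscale, mul_zero, smul_eq_mul] at h1
    rw [← h1, deriv_const_mul_field]
  have hd' : deriv (fun t : ℝ => E p (v₀ + t • ξ)) 0
      = c * deriv (fun t : ℝ => E p (v + t • ξ)) 0 := by
    apply mul_left_cancel₀ hc0.ne'
    rw [hder]; ring
  rw [h0, hd', mul_div_assoc, ← hc]
  field_simp

end FinslerConformal
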